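/- Let X be a nonnegative, non-arithmetic random variable with E[X] = ∞ whose truncated mean ℓ(x) = ∫₀ˣ (1 - F(t)) dt is slowly varying at infinity, and let C(θ) = Re(1/(1 - φ(θ))) where φ is the characteristic function of X. Then J(θ) := ∫₀^θ C(t) dt ∼ (π/2)/ℓ(1/θ) as θ → 0+. -/

import Mathlib

/-!
Write `L(a) = E[e^{-aX}]` and `C_r(t) = Re (1 / (1 - r φ(t)))`, so that `C = C_1`.

*Poisson formula.* The Cauchy kernel `a / (a² + t²)` has Fourier transform `π e^{-a|x|}`
(`cauchyK_fourier`). Applied to the laws of the sums of `n` independent copies of `X ≥ 0` and summed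
against `rⁿ`, `r < 1`, this gives `∫ a² / (a² + t²) C_r(t) dt = G_r(a) := π a / (1 - r L(a))`
(`cauchy_geom`, `poissonG_spec`).

*Tauberian step.* With `u = t / θ`, the difference between `1_{|u| ≤ 1}` and `1 / (1 + u²)` is
bounded by `(5/3) (4 / (4 + u²) - 1 / (1 + u²))`. As `C_r ≥ 0`, integrating gives
`|2 ∫₀^θ C_r - G_r(θ)| ≤ (5/3) (G_r(2θ) - G_r(θ))` (`tauber_r`). The same inequality holds at `r = 1`
(`tauber_one`): away from `0` the functions `C_r` converge to `C` dominatedly, since `φ ≠ 1` there by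
non-arithmeticity, and the mass of `C_r` on `(0, δ]` is at most `G_r(δ)`, where `G_1(δ) → 0` because
`ℓ` is unbounded.

*Abelian step.* Since `ℓ(c) = E[min(X, c)]`, a pointwise comparison of `1 - e^{-aX}` with
`min(aX, 1)` and slow variation give `1 - L(a) ∼ a ℓ(1/a)` (`lap_ell_tendsto`), that is
`G_1(a) ∼ π / ℓ(1/a)`. Slow variation then makes `G_1(2θ) - G_1(θ)` negligible compared with
`1 / ℓ(1/θ)`, whence `2 ∫₀^θ C ∼ π / ℓ(1/θ)`.
-/

open MeasureTheory Filter Set Asymptotics Topology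

/-- Tail of a distribution: `P[X > x]`. -/
noncomputable def tailF (μ : Measure ℝ) (x : ℝ) : ℝ := (μ (Set.Ioi x)).toReal

/-- Truncated mean `ℓ(x) = ∫₀ˣ (1 - F(t)) dt`. -/
noncomputable def ell (μ : Measure ℝ) (x : ℝ) : ℝ := ∫ t in (0:ℝ)..x, tailF μ t

/-- A function is slowly varying at infinity. -/
def SlowlyVarying (f : ℝ → ℝ) : Prop :=
  (∀ᶠ x in atTop, 0 < f x) ∧
    ∀ c : ℝ, 1 < c → Tendsto (fun x => f (c * x) / f x) atTop (𝓝 1)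

/-- Characteristic function `φ(θ) = E[e^{iθX}]`. -/
noncomputable def charF (μ : Measure ℝ) (θ : ℝ) : ℂ :=
  ∫ x, Complex.exp (Complex.I * θ * x) ∂μ

/-- `X` is arithmetic: `X/h ∈ ℤ` almost surely for some `h > 0`. -/
def IsArith (μ : Measure ℝ) : Prop :=
  ∃ h : ℝ, 0 < h ∧ μ {x : ℝ | ∃ n : ℤ, x = n * h} = 1

/-! ### Fourier transform of the Cauchy kernel -/

lemma cauchyK_integrable {a : ℝ} (ha : 0 < a) : Integrable (fun t : ℝ => a / (a ^ 2 + t ^ 2)) := by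
  have h := (integrable_inv_one_add_sq.comp_mul_left' (inv_ne_zero ha.ne')).const_mul a⁻¹
  refine h.congr (ae_of_all _ fun t => ?_)
  have : 0 < a ^ 2 + t ^ 2 := by positivity
  field_simp

lemma laplace_integrable {a : ℝ} (ha : 0 < a) :
    Integrable (fun x : ℝ => (Real.exp (-a * |x|) : ℂ)) := by
  suffices h : Integrable (fun x : ℝ => Real.exp (-a * |x|)) from h.ofReal
  rw [← integrableOn_univ, ← Iic_union_Ioi (a := (0:ℝ))]
  refine IntegrableOn.union ?_ ?_
  · refine (integrableOn_exp_mul_Iic ha 0).congr_fun (fun x hx => ?_) measurableSet_Iic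
    simp [abs_of_nonpos (mem_Iic.1 hx)]
  · refine (integrableOn_exp_mul_Ioi (neg_lt_zero.2 ha) 0).congr_fun (fun x hx => ?_)
      measurableSet_Ioi
    simp [abs_of_pos (mem_Ioi.1 hx)]

/-- The Fourier transform of the two-sided exponential is a Cauchy kernel. -/
lemma laplace_fourier {a : ℝ} (ha : 0 < a) (w : ℝ) :
    FourierTransform.fourier (fun x : ℝ => (Real.exp (-a * |x|) : ℂ)) w
      = ((2 * (a / (a ^ 2 + (2 * Real.pi * w) ^ 2)) : ℝ) : ℂ) := by
  rw [Real.fourier_real_eq_integral_exp_smul]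
  have e1 : ∀ x ∈ Iic (0:ℝ), Complex.exp (((-2 * Real.pi * x * w : ℝ) : ℂ) * Complex.I) •
      (Real.exp (-a * |x|) : ℂ) = Complex.exp ((a - 2 * Real.pi * w * Complex.I) * x) := by
    intro x hx
    rw [abs_of_nonpos (mem_Iic.1 hx), smul_eq_mul, Complex.ofReal_exp, ← Complex.exp_add]
    congr 1; push_cast; ring
  have e2 : ∀ x ∈ Ioi (0:ℝ), Complex.exp (((-2 * Real.pi * x * w : ℝ) : ℂ) * Complex.I) •
      (Real.exp (-a * |x|) : ℂ) = Complex.exp ((-a - 2 * Real.pi * w * Complex.I) * x) := by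
    intro x hx
    rw [abs_of_pos (mem_Ioi.1 hx), smul_eq_mul, Complex.ofReal_exp, ← Complex.exp_add]
    congr 1; push_cast; ring
  have r1 : 0 < ((a:ℂ) - 2 * Real.pi * w * Complex.I).re := by simpa using ha
  have r2 : (-(a:ℂ) - 2 * Real.pi * w * Complex.I).re < 0 := by simpa using ha
  rw [← intervalIntegral.integral_Iic_add_Ioi (b := 0),
    setIntegral_congr_fun measurableSet_Iic e1, setIntegral_congr_fun measurableSet_Ioi e2,
    integral_exp_mul_complex_Iic r1, integral_exp_mul_complex_Ioi r2]
  · have n1 : ((a:ℂ) - 2 * Real.pi * w * Complex.I) ≠ 0 := by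
      intro h; rw [h] at r1; simp at r1
    have n2 : (-(a:ℂ) - 2 * Real.pi * w * Complex.I) ≠ 0 := by
      intro h; rw [h] at r2; simp at r2
    have n3 : ((a:ℂ) ^ 2 + (2 * Real.pi * w) ^ 2) ≠ 0 := by
      have : 0 < a ^ 2 + (2 * Real.pi * w) ^ 2 := by positivity
      exact_mod_cast this.ne'
    push_cast
    simp only [mul_zero, Complex.exp_zero]
    rw [div_add_div _ _ n1 n2, mul_div_assoc', div_eq_div_iff (mul_ne_zero n1 n2) n3]
    have : Complex.I ^ 2 = -1 := Complex.I_sq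
    linear_combination (-8 * Real.pi ^ 2 * w ^ 2 * a : ℂ) * this
  · exact (integrableOn_exp_mul_complex_Iic r1 0).congr_fun (fun x hx => (e1 x hx).symm)
      measurableSet_Iic
  · exact (integrableOn_exp_mul_complex_Ioi r2 0).congr_fun (fun x hx => (e2 x hx).symm)
      measurableSet_Ioi

/-- The characteristic function of the (unnormalised) Cauchy kernel, by Fourier inversion. -/
lemma cauchyK_fourier {a : ℝ} (ha : 0 < a) (x : ℝ) :
    ∫ t : ℝ, ((a / (a ^ 2 + t ^ 2) : ℝ) : ℂ) * Complex.exp (Complex.I * t * x)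
      = Real.pi * Real.exp (-a * |x|) := by
  set f : ℝ → ℂ := fun x : ℝ => (Real.exp (-a * |x|) : ℂ) with hf
  have hF : FourierTransform.fourier f =
      fun w : ℝ => ((2 * (a / (a ^ 2 + (2 * Real.pi * w) ^ 2)) : ℝ) : ℂ) :=
    funext (laplace_fourier ha)
  have hFi : Integrable (FourierTransform.fourier f) := by
    rw [hF]
    exact (((cauchyK_integrable ha).comp_mul_left' (R := 2 * Real.pi)
      (by positivity)).const_mul 2).ofReal
  have hc : Continuous f := by rw [hf]; fun_prop
  have h := congrFun (hc.fourierInv_fourier_eq (laplace_integrable ha) hFi) x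
  rw [Real.fourierInv_eq', hF] at h
  have h2 := Measure.integral_comp_mul_left
    (fun t : ℝ => ((a / (a ^ 2 + t ^ 2) : ℝ) : ℂ) * Complex.exp (Complex.I * t * x)) (2 * Real.pi)
  have h3 : (∫ v : ℝ, Complex.exp (((2 * Real.pi * inner ℝ v x : ℝ) : ℂ) * Complex.I) •
      ((2 * (a / (a ^ 2 + (2 * Real.pi * v) ^ 2)) : ℝ) : ℂ)) = 2 * ∫ v : ℝ,
      ((a / (a ^ 2 + (2 * Real.pi * v) ^ 2) : ℝ) : ℂ) *
        Complex.exp (Complex.I * ((2 * Real.pi * v : ℝ) : ℂ) * x) := by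
    rw [← integral_const_mul]
    refine integral_congr_ae (ae_of_all _ fun v => ?_)
    simp only [smul_eq_mul, RCLike.inner_apply, conj_trivial]
    have : (((2 * Real.pi * (x * v) : ℝ) : ℂ) * Complex.I)
        = (Complex.I * ((2 * Real.pi * v : ℝ) : ℂ) * x) := by push_cast; ring
    rw [this]; push_cast; ring
  rw [h3, h2, abs_of_pos (by positivity), Complex.real_smul] at h
  have hpi : (Real.pi : ℂ) ≠ 0 := by exact_mod_cast Real.pi_ne_zero
  have h4 : (Real.exp (-a * |x|) : ℂ) = f x := rfl
  rw [h4, ← h]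
  generalize (∫ t : ℝ, ((a / (a ^ 2 + t ^ 2) : ℝ) : ℂ) * Complex.exp (Complex.I * t * x)) = z
  push_cast
  field_simp

lemma charF_eq (μ : Measure ℝ) (t : ℝ) : charF μ t = charFun μ t := by
  rw [charF, charFun_apply_real]
  refine integral_congr_ae (ae_of_all _ fun x => ?_)
  simp only; congr 1; ring

/-! ### Poisson formula for the discounted renewal measure -/

lemma integrable_exp_neg {ν : Measure ℝ} [IsFiniteMeasure ν] (hν : ∀ᵐ x ∂ν, 0 ≤ x)
    {a : ℝ} (ha : 0 < a) : Integrable (fun x : ℝ => Real.exp (-a * x)) ν := by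
  refine (integrable_const (1:ℝ)).mono' (by fun_prop) ?_
  filter_upwards [hν] with x hx
  rw [Real.norm_eq_abs, abs_of_pos (Real.exp_pos _), Real.exp_le_one_iff]
  nlinarith

/-- Poisson formula: integrating a characteristic function against the Cauchy kernel evaluates
the Laplace transform. -/
lemma cauchy_charFun {ν : Measure ℝ} [IsProbabilityMeasure ν] (hν : ∀ᵐ x ∂ν, 0 ≤ x)
    {a : ℝ} (ha : 0 < a) :
    ∫ t : ℝ, ((a / (a ^ 2 + t ^ 2) : ℝ) : ℂ) * charFun ν t
      = ((Real.pi * ∫ x, Real.exp (-a * x) ∂ν : ℝ) : ℂ) := by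
  have hint : Integrable (Function.uncurry fun (t x : ℝ) =>
      ((a / (a ^ 2 + t ^ 2) : ℝ) : ℂ) * Complex.exp (Complex.I * t * x)) (volume.prod ν) := by
    have h1 : Integrable (fun p : ℝ × ℝ => (a / (a ^ 2 + p.1 ^ 2)) * (1:ℝ)) (volume.prod ν) :=
      (cauchyK_integrable ha).mul_prod (integrable_const (1:ℝ))
    refine h1.mono ?_ (ae_of_all _ fun p => ?_)
    · apply Measurable.aestronglyMeasurable
      unfold Function.uncurry
      fun_prop
    · simp only [Function.uncurry, norm_mul, Complex.norm_real, norm_one]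
      rw [show Complex.I * (p.1:ℂ) * (p.2:ℂ) = ((p.1 * p.2 : ℝ) : ℂ) * Complex.I by
        push_cast; ring, Complex.norm_exp_ofReal_mul_I]
  calc ∫ t : ℝ, ((a / (a ^ 2 + t ^ 2) : ℝ) : ℂ) * charFun ν t
      = ∫ t : ℝ, ∫ x, ((a / (a ^ 2 + t ^ 2) : ℝ) : ℂ) * Complex.exp (Complex.I * t * x) ∂ν := by
        refine integral_congr_ae (ae_of_all _ fun t => ?_)
        simp only
        rw [← charF_eq, charF, integral_const_mul]
    _ = ∫ x : ℝ, (∫ t : ℝ, ((a / (a ^ 2 + t ^ 2) : ℝ) : ℂ) * Complex.exp (Complex.I * t * x)) ∂ν :=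
        integral_integral_swap hint
    _ = ∫ x : ℝ, ((Real.pi * Real.exp (-a * x) : ℝ) : ℂ) ∂ν := by
        refine integral_congr_ae ?_
        filter_upwards [hν] with x hx
        rw [cauchyK_fourier ha, abs_of_nonneg hx]
        push_cast; rfl
    _ = _ := by rw [integral_complex_ofReal, integral_const_mul]

/-- The law of a sum of `n` independent copies of `X`. -/
lemma exists_conv_pow (μ : Measure ℝ) [IsProbabilityMeasure μ] (hμ : ∀ᵐ x ∂μ, 0 ≤ x) (n : ℕ) :
    ∃ ν : Measure ℝ, IsProbabilityMeasure ν ∧ (∀ᵐ x ∂ν, 0 ≤ x) ∧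
      (∀ t, charFun ν t = charFun μ t ^ n) ∧
      ∀ a : ℝ, 0 < a → ∫ x, Real.exp (-a * x) ∂ν = (∫ x, Real.exp (-a * x) ∂μ) ^ n := by
  induction n with
  | zero =>
    refine ⟨Measure.dirac 0, inferInstance, ?_, ?_, ?_⟩
    · rw [ae_dirac_eq]; simp
    · simp
    · simp
  | succ n ih =>
    obtain ⟨ν, hp, h0, hc, hl⟩ := ih
    have hae : ∀ᵐ x ∂(ν ∗ μ), 0 ≤ x := by
      rw [Measure.conv, ae_map_iff (by fun_prop) measurableSet_Ici]
      filter_upwards [Measure.quasiMeasurePreserving_fst.ae h0,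
        Measure.quasiMeasurePreserving_snd.ae hμ] with p h1 h2
      exact add_nonneg h1 h2
    refine ⟨ν ∗ μ, inferInstance, hae, fun t => ?_, fun a ha => ?_⟩
    · rw [charFun_conv, hc, pow_succ]
    · rw [integral_conv (integrable_exp_neg hae ha)]
      simp only [mul_add, Real.exp_add, integral_const_mul, integral_mul_const]
      rw [hl a ha, pow_succ]

/-- The Laplace transform `E[e^{-aX}]` of `μ`; only used for `a > 0` and `μ` carried by
`[0, ∞)`. -/
noncomputable def lap (μ : Measure ℝ) (a : ℝ) : ℝ := ∫ x, Real.exp (-a * x) ∂μ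

lemma norm_rcharFun_lt {μ : Measure ℝ} [IsProbabilityMeasure μ] {r : ℝ} (hr0 : 0 ≤ r)
    (hr1 : r < 1) (t : ℝ) : ‖(r : ℂ) * charFun μ t‖ < 1 := by
  rw [norm_mul, Complex.norm_real, Real.norm_of_nonneg hr0]
  have := norm_charFun_le_one (μ := μ) t
  nlinarith [norm_nonneg (charFun μ t)]

lemma lap_nonneg (μ : Measure ℝ) (a : ℝ) : 0 ≤ lap μ a :=
  integral_nonneg fun _ => (Real.exp_pos _).le

lemma lap_le_one {μ : Measure ℝ} [IsProbabilityMeasure μ] (hμ : ∀ᵐ x ∂μ, 0 ≤ x)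
    {a : ℝ} (ha : 0 < a) : lap μ a ≤ 1 := by
  have := integral_mono_ae (integrable_exp_neg hμ ha) (integrable_const (1:ℝ)) (by
    filter_upwards [hμ] with x hx
    rw [Real.exp_le_one_iff]
    nlinarith)
  simpa [lap] using this

/-- The Poisson formula for the (discounted) renewal measure `∑ rⁿ μ^{*n}`. -/
lemma cauchy_geom {μ : Measure ℝ} [IsProbabilityMeasure μ] (hμ : ∀ᵐ x ∂μ, 0 ≤ x)
    {a r : ℝ} (ha : 0 < a) (hr0 : 0 ≤ r) (hr1 : r < 1) :
    ∫ t : ℝ, ((a / (a ^ 2 + t ^ 2) : ℝ) : ℂ) * (1 - r * charFun μ t)⁻¹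
      = ((Real.pi / (1 - r * lap μ a) : ℝ) : ℂ) := by
  set K : ℝ → ℝ := fun t => a / (a ^ 2 + t ^ 2) with hK
  have hKi : Integrable K := cauchyK_integrable ha
  have hK0 : ∀ t, 0 ≤ K t := fun t => by simp only [hK]; positivity
  have hb : ∀ (n : ℕ) (t : ℝ), ‖(K t : ℂ) * (r * charFun μ t) ^ n‖ ≤ r ^ n * K t := by
    intro n t
    rw [norm_mul, Complex.norm_real, Real.norm_of_nonneg (hK0 t), norm_pow, norm_mul,
      Complex.norm_real, Real.norm_of_nonneg hr0, mul_comm]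
    refine mul_le_mul_of_nonneg_right ?_ (hK0 t)
    gcongr
    exact mul_le_of_le_one_right hr0 (norm_charFun_le_one t)
  have hint : ∀ n : ℕ, Integrable (fun t : ℝ => (K t : ℂ) * (r * charFun μ t) ^ n) := by
    intro n
    refine (hKi.const_mul (r ^ n)).mono' ?_ (ae_of_all _ (hb n))
    have := measurable_charFun (μ := μ)
    apply Measurable.aestronglyMeasurable
    fun_prop
  have hs := hasSum_integral_of_summable_integral_norm hint ?_
  · have e1 : ∀ n : ℕ, ∫ t : ℝ, (K t : ℂ) * (r * charFun μ t) ^ n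
        = ((Real.pi * (r * lap μ a) ^ n : ℝ) : ℂ) := by
      intro n
      obtain ⟨ν, hp, h0, hc, hl⟩ := exists_conv_pow μ hμ n
      have := cauchy_charFun h0 ha
      rw [hl a ha] at this
      calc ∫ t : ℝ, (K t : ℂ) * (r * charFun μ t) ^ n
          = ∫ t : ℝ, (r : ℂ) ^ n * ((K t : ℂ) * charFun ν t) := by
            refine integral_congr_ae (ae_of_all _ fun t => ?_)
            simp only; rw [hc]; ring
        _ = _ := by
            rw [integral_const_mul, this]
            simp only [lap]
            push_cast; ring
    have e2 : ∀ t : ℝ, ∑' n : ℕ, (K t : ℂ) * (r * charFun μ t) ^ n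
        = (K t : ℂ) * (1 - r * charFun μ t)⁻¹ := by
      intro t
      rw [tsum_mul_left, tsum_geometric_of_norm_lt_one (norm_rcharFun_lt hr0 hr1 t)]
    simp_rw [e1, e2] at hs
    have hg : HasSum (fun n : ℕ => Real.pi * (r * lap μ a) ^ n)
        (Real.pi * (1 - r * lap μ a)⁻¹) :=
      (hasSum_geometric_of_lt_one (mul_nonneg hr0 (lap_nonneg μ a))
        (by nlinarith [lap_nonneg μ a, lap_le_one hμ ha])).mul_left _
    rw [div_eq_mul_inv]
    exact hs.unique (Complex.hasSum_ofReal.2 hg)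
  · refine Summable.of_nonneg_of_le (fun n => integral_nonneg fun t => norm_nonneg _) (fun n => ?_)
      ((summable_geometric_of_lt_one hr0 hr1).mul_right (∫ t, K t))
    rw [← integral_const_mul]
    exact integral_mono (hint n).norm (hKi.const_mul _) (hb n)

/-! ### Tauberian estimate for `r < 1` -/

/-- `Re (1 / (1 - r φ(t)))`: the density of the spectral measure of the discounted renewal
measure; at `r = 1` it is `C(t)`. -/
noncomputable def specD (μ : Measure ℝ) (r t : ℝ) : ℝ := ((1 - r * charFun μ t)⁻¹).re

lemma specD_nonneg {μ : Measure ℝ} [IsProbabilityMeasure μ] {r : ℝ} (hr0 : 0 ≤ r)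
    (hr1 : r ≤ 1) (t : ℝ) : 0 ≤ specD μ r t := by
  rw [specD, Complex.inv_re]
  refine div_nonneg ?_ (Complex.normSq_nonneg _)
  have h1 := Complex.re_le_norm (charFun μ t)
  have h2 := norm_charFun_le_one (μ := μ) t
  simp only [Complex.sub_re, Complex.one_re, Complex.re_ofReal_mul]
  nlinarith

lemma specD_neg (μ : Measure ℝ) (r t : ℝ) : specD μ r (-t) = specD μ r t := by
  simp only [specD, charFun_neg]
  rw [← Complex.conj_re ((1 - r * charFun μ t)⁻¹)]
  simp [map_inv₀]

lemma one_sub_ne {μ : Measure ℝ} [IsProbabilityMeasure μ] {r : ℝ} (hr0 : 0 ≤ r)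
    (hr1 : r < 1) (t : ℝ) : 1 - (r : ℂ) * charFun μ t ≠ 0 := by
  intro h
  have := norm_rcharFun_lt (μ := μ) hr0 hr1 t
  rw [← sub_eq_zero.1 h] at this
  simp at this

lemma specD_continuous {μ : Measure ℝ} [IsProbabilityMeasure μ] {r : ℝ} (hr0 : 0 ≤ r)
    (hr1 : r < 1) : Continuous (specD μ r) := by
  have := continuous_charFun (μ := μ)
  exact Complex.continuous_re.comp
    ((continuous_const.sub (continuous_const.mul this)).inv₀ (one_sub_ne hr0 hr1))

/-- `G_r(a) = π a / (1 - r L(a))`; for `0 ≤ r < 1` it is the Poisson integral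
`∫ a² / (a² + t²) · Re (1 / (1 - r φ(t))) dt`, see `poissonG_spec`. At `r = 1` only the closed form
is used. -/
noncomputable def poissonG (μ : Measure ℝ) (r a : ℝ) : ℝ := Real.pi * a / (1 - r * lap μ a)

lemma poissonG_spec {μ : Measure ℝ} [IsProbabilityMeasure μ] (hμ : ∀ᵐ x ∂μ, 0 ≤ x)
    {a r : ℝ} (ha : 0 < a) (hr0 : 0 ≤ r) (hr1 : r < 1) :
    Integrable (fun t => a ^ 2 / (a ^ 2 + t ^ 2) * specD μ r t) ∧
    ∫ t, a ^ 2 / (a ^ 2 + t ^ 2) * specD μ r t = poissonG μ r a := by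
  have h := cauchy_geom hμ ha hr0 hr1
  have hL := lap_le_one hμ ha
  have hL0 := lap_nonneg μ a
  have hpos : 0 < 1 - r * lap μ a := by nlinarith
  -- a non-integrable integrand would have integral `0`, but the value is positive
  have hint : Integrable (fun t : ℝ => ((a / (a ^ 2 + t ^ 2) : ℝ) : ℂ) *
      (1 - r * charFun μ t)⁻¹) := by
    by_contra hn
    rw [integral_undef hn] at h
    have : Real.pi / (1 - r * lap μ a) = 0 := by exact_mod_cast h.symm
    exact (div_pos Real.pi_pos hpos).ne' this
  have e : ∀ t : ℝ, a ^ 2 / (a ^ 2 + t ^ 2) * specD μ r t = a * (((a / (a ^ 2 + t ^ 2) : ℝ) : ℂ) *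
      (1 - r * charFun μ t)⁻¹).re := by
    intro t
    rw [Complex.re_ofReal_mul, specD]; ring
  simp_rw [e]
  refine ⟨hint.re.const_mul a, ?_⟩
  rw [integral_const_mul]
  have h2 := integral_re hint
  simp only [RCLike.re_to_complex] at h2
  rw [h2, h, Complex.ofReal_re, poissonG]
  ring

lemma two_mul_integral_specD {μ : Measure ℝ} [IsProbabilityMeasure μ] {r θ : ℝ} (hr0 : 0 ≤ r)
    (hr1 : r < 1) (hθ : 0 < θ) :
    2 * ∫ t in (0:ℝ)..θ, specD μ r t = ∫ t, (Ioc (-θ) θ).indicator (specD μ r) t := by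
  have hc := specD_continuous (μ := μ) hr0 hr1
  rw [integral_indicator measurableSet_Ioc, ← intervalIntegral.integral_of_le (by linarith),
    ← intervalIntegral.integral_add_adjacent_intervals (a := -θ) (b := 0) (hc.intervalIntegrable _ _)
      (hc.intervalIntegrable _ _)]
  have := intervalIntegral.integral_comp_neg (a := 0) (b := θ) (specD μ r)
  simp only [specD_neg, neg_zero] at this
  rw [← this]; ring

lemma ind_integrable {μ : Measure ℝ} [IsProbabilityMeasure μ] {r θ : ℝ} (hr0 : 0 ≤ r)
    (hr1 : r < 1) : Integrable ((Ioc (-θ) θ).indicator (specD μ r)) := by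
  rw [integrable_indicator_iff measurableSet_Ioc]
  exact (specD_continuous hr0 hr1).integrableOn_Ioc

/-- Quantitative Tauberian estimate. The defect between the sharp cut-off at `θ` and the Poisson
kernel at scale `θ` is pointwise controlled by the increment of the Poisson kernel between the
scales `θ` and `2θ`. -/
lemma tauber_r {μ : Measure ℝ} [IsProbabilityMeasure μ] (hμ : ∀ᵐ x ∂μ, 0 ≤ x)
    {θ r : ℝ} (hθ : 0 < θ) (hr0 : 0 ≤ r) (hr1 : r < 1) :
    |2 * (∫ t in (0:ℝ)..θ, specD μ r t) - poissonG μ r θ|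
      ≤ 5 / 3 * (poissonG μ r (2 * θ) - poissonG μ r θ) := by
  obtain ⟨i1, e1⟩ := poissonG_spec hμ hθ hr0 hr1
  obtain ⟨i2, e2⟩ := poissonG_spec hμ (by positivity : 0 < 2 * θ) hr0 hr1
  have i0 := ind_integrable (μ := μ) (θ := θ) hr0 hr1
  rw [two_mul_integral_specD hr0 hr1 hθ, ← e1, ← e2, ← integral_sub i0 i1, ← integral_sub i2 i1,
    ← integral_const_mul]
  refine (abs_integral_le_integral_abs).trans
    (integral_mono (i0.sub i1).abs ((i2.sub i1).const_mul _) fun t => ?_)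
  have hC := specD_nonneg (μ := μ) hr0 hr1.le t
  have hp1 : 0 < θ ^ 2 + t ^ 2 := by positivity
  have hp2 : 0 < (2 * θ) ^ 2 + t ^ 2 := by positivity
  have hdiff : (2 * θ) ^ 2 / ((2 * θ) ^ 2 + t ^ 2) - θ ^ 2 / (θ ^ 2 + t ^ 2)
      = 3 * θ ^ 2 * t ^ 2 / (((2 * θ) ^ 2 + t ^ 2) * (θ ^ 2 + t ^ 2)) := by
    field_simp; ring
  simp only
  rw [← sub_mul, hdiff]
  by_cases ht : t ∈ Ioc (-θ) θ
  · rw [indicator_of_mem ht]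
    have h1 : specD μ r t - θ ^ 2 / (θ ^ 2 + t ^ 2) * specD μ r t
        = t ^ 2 / (θ ^ 2 + t ^ 2) * specD μ r t := by field_simp; ring
    rw [h1, abs_of_nonneg (by positivity), ← mul_assoc]
    refine mul_le_mul_of_nonneg_right ?_ hC
    have : t ^ 2 ≤ θ ^ 2 := sq_le_sq' ht.1.le ht.2
    rw [mul_div_assoc', div_le_div_iff₀ hp1 (by positivity)]
    nlinarith [mul_nonneg (mul_nonneg (sq_nonneg t) hp1.le) (sub_nonneg.2 this)]
  · rw [indicator_of_notMem ht, zero_sub, abs_neg, abs_of_nonneg (by positivity), ← mul_assoc]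
    refine mul_le_mul_of_nonneg_right ?_ hC
    have : θ ^ 2 ≤ t ^ 2 := by
      rw [mem_Ioc, not_and_or, not_lt, not_le] at ht
      rcases ht with h | h <;> nlinarith
    rw [mul_div_assoc', div_le_div_iff₀ hp1 (by positivity)]
    nlinarith [mul_nonneg (mul_nonneg (sq_nonneg θ) hp1.le) (sub_nonneg.2 this)]

/-- The mass near the origin is bounded by the Poisson integral, which has a limit as `r → 1`. -/
lemma small_r {μ : Measure ℝ} [IsProbabilityMeasure μ] (hμ : ∀ᵐ x ∂μ, 0 ≤ x)
    {θ r : ℝ} (hθ : 0 < θ) (hr0 : 0 ≤ r) (hr1 : r < 1) :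
    2 * (∫ t in (0:ℝ)..θ, specD μ r t) ≤ 2 * poissonG μ r θ := by
  obtain ⟨i1, e1⟩ := poissonG_spec hμ hθ hr0 hr1
  have i0 := ind_integrable (μ := μ) (θ := θ) hr0 hr1
  rw [two_mul_integral_specD hr0 hr1 hθ, ← e1, ← integral_const_mul]
  refine integral_mono i0 (i1.const_mul _) fun t => ?_
  have hC := specD_nonneg (μ := μ) hr0 hr1.le t
  have hp1 : 0 < θ ^ 2 + t ^ 2 := by positivity
  by_cases ht : t ∈ Ioc (-θ) θ
  · rw [indicator_of_mem ht]
    have : t ^ 2 ≤ θ ^ 2 := sq_le_sq' ht.1.le ht.2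
    simp only
    rw [← mul_assoc]
    refine le_mul_of_one_le_left hC ?_
    rw [mul_div_assoc', le_div_iff₀ hp1]; linarith
  · rw [indicator_of_notMem ht]
    simp only
    positivity

/-! ### The limit `r → 1` -/

/-- Domination uniform in `r`: `|1 - φ| ≤ |1 - r φ| + (1 - r) ≤ 2 |1 - r φ|`. -/
lemma specD_norm_le {μ : Measure ℝ} [IsProbabilityMeasure μ] {r : ℝ} (hr0 : 0 ≤ r)
    (hr1 : r < 1) {t : ℝ} (ht : charFun μ t ≠ 1) :
    ‖specD μ r t‖ ≤ 2 * ‖(1 - charFun μ t)⁻¹‖ := by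
  refine (Complex.abs_re_le_norm _).trans ?_
  rw [norm_inv, norm_inv]
  have h1 : 0 < ‖1 - charFun μ t‖ := norm_pos_iff.2 (sub_ne_zero.2 ht.symm)
  have h2 : 0 < ‖1 - r * charFun μ t‖ := norm_pos_iff.2 (one_sub_ne hr0 hr1 t)
  have h3 := norm_rcharFun_lt (μ := μ) hr0 hr1 t
  have hn := norm_charFun_le_one (μ := μ) t
  have h4 : ‖1 - charFun μ t‖ ≤ ‖1 - r * charFun μ t‖ + ‖((1 - r : ℝ) : ℂ) * charFun μ t‖ := by
    refine le_of_eq_of_le ?_ (norm_sub_le _ _)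
    congr 1; push_cast; ring
  rw [norm_mul, Complex.norm_real, Real.norm_of_nonneg (by linarith)] at h4
  have h5 : 1 - r ≤ ‖1 - r * charFun μ t‖ := by
    have := norm_sub_norm_le (1:ℂ) (r * charFun μ t)
    rw [norm_one, norm_mul, Complex.norm_real, Real.norm_of_nonneg hr0] at this
    nlinarith
  rw [← div_eq_mul_inv, inv_eq_one_div, div_le_div_iff₀ h2 h1]
  nlinarith

/-- The Tauberian estimate in the limit `r → 1`. -/
lemma tauber_one {μ : Measure ℝ} [IsProbabilityMeasure μ] (hμ : ∀ᵐ x ∂μ, 0 ≤ x)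
    (hne : ∀ t : ℝ, t ≠ 0 → charFun μ t ≠ 1) (hlap : ∀ a : ℝ, 0 < a → lap μ a < 1)
    (hG : Tendsto (poissonG μ 1) (𝓝[>] 0) (𝓝 0)) {θ : ℝ} (hθ : 0 < θ) :
    |2 * (∫ t in (0:ℝ)..θ, specD μ 1 t) - poissonG μ 1 θ|
      ≤ 5 / 3 * (poissonG μ 1 (2 * θ) - poissonG μ 1 θ) := by
  have hcont : ContinuousOn (fun t => (1 - charFun μ t)⁻¹) {0}ᶜ :=
    (continuous_const.sub (continuous_charFun (μ := μ))).continuousOn.inv₀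
      fun t ht => sub_ne_zero.2 (hne t ht).symm
  have hcont1 : ContinuousOn (specD μ 1) {0}ᶜ := by
    refine (Complex.continuous_re.comp_continuousOn hcont).congr fun t _ => ?_
    simp [specD]
  have hsub : ∀ δ : ℝ, 0 < δ → Icc δ θ ⊆ {0}ᶜ := by
    intro δ hδ x hx h
    rw [mem_singleton_iff] at h
    linarith [hx.1]
  have hr : ∀ᶠ r : ℝ in 𝓝[<] 1, 0 ≤ r ∧ r < 1 := by
    filter_upwards [self_mem_nhdsWithin, mem_nhdsWithin_of_mem_nhds (Ioi_mem_nhds zero_lt_one)]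
      with r h1 h2 using ⟨(mem_Ioi.1 h2).le, h1⟩
  have hGr : ∀ a : ℝ, 0 < a → Tendsto (fun r => poissonG μ r a) (𝓝[<] 1) (𝓝 (poissonG μ 1 a)) := by
    intro a ha
    refine Tendsto.mono_left ?_ nhdsWithin_le_nhds
    have : ContinuousAt (fun r => poissonG μ r a) 1 := by
      unfold poissonG
      refine ContinuousAt.div (by fun_prop) (by fun_prop) ?_
      have := hlap a ha
      linarith
    exact this
  have hlim : ∀ δ : ℝ, 0 < δ → δ ≤ θ → Tendsto (fun r => ∫ t in δ..θ, specD μ r t) (𝓝[<] 1)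
      (𝓝 (∫ t in δ..θ, specD μ 1 t)) := by
    intro δ hδ hδθ
    refine intervalIntegral.tendsto_integral_filter_of_dominated_convergence
      (fun t => 2 * ‖(1 - charFun μ t)⁻¹‖) ?_ ?_ ?_ ?_
    · filter_upwards [hr] with r h
      exact (specD_continuous h.1 h.2).aestronglyMeasurable
    · filter_upwards [hr] with r h
      refine ae_of_all _ fun t ht => ?_
      rw [uIoc_of_le hδθ] at ht
      exact specD_norm_le h.1 h.2 (hne t (by linarith [ht.1]))
    · apply ContinuousOn.intervalIntegrable
      rw [uIcc_of_le hδθ]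
      exact continuousOn_const.mul (hcont.mono (hsub δ hδ)).norm
    · refine ae_of_all _ fun t ht => ?_
      rw [uIoc_of_le hδθ] at ht
      have h0 := hne t (by linarith [ht.1])
      refine Tendsto.mono_left ?_ nhdsWithin_le_nhds
      have : ContinuousAt (fun r : ℝ => specD μ r t) 1 := by
        unfold specD
        refine Complex.continuous_re.continuousAt.comp (ContinuousAt.inv₀ (by fun_prop) ?_)
        simpa using sub_ne_zero.2 h0.symm
      exact this
  -- the estimate with the interval `(0, δ]` removed
  have hδ : ∀ δ : ℝ, 0 < δ → δ ≤ θ →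
      |2 * (∫ t in δ..θ, specD μ 1 t) - poissonG μ 1 θ|
        ≤ 5 / 3 * (poissonG μ 1 (2 * θ) - poissonG μ 1 θ) + 2 * poissonG μ 1 δ := by
    intro δ hδ hδθ
    refine le_of_tendsto_of_tendsto (((hlim δ hδ hδθ).const_mul 2).sub (hGr θ hθ)).abs
      (((((hGr (2 * θ) (by positivity)).sub (hGr θ hθ)).const_mul (5 / 3))).add
        ((hGr δ hδ).const_mul 2)) ?_
    filter_upwards [hr] with r h
    have hc := specD_continuous (μ := μ) h.1 h.2
    have h1 := tauber_r hμ hθ h.1 h.2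
    have h2 := small_r hμ hδ h.1 h.2
    have h3 := intervalIntegral.integral_add_adjacent_intervals (a := 0) (b := δ) (c := θ)
      (hc.intervalIntegrable (μ := volume) _ _) (hc.intervalIntegrable _ _)
    have h4 : 0 ≤ ∫ t in (0:ℝ)..δ, specD μ r t :=
      intervalIntegral.integral_nonneg hδ.le fun t _ => specD_nonneg h.1 h.2.le t
    rw [← h3] at h1
    rw [abs_le] at h1 ⊢
    constructor <;> linarith [h1.1, h1.2]
  -- let `δ` tend to `0` along a sequence; the uniform bound also gives integrability up to `0`
  set u : ℕ → ℝ := fun n => θ / (n + 2) with hu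
  have hu0 : ∀ n, 0 < u n := fun n => by simp only [hu]; positivity
  have hu1 : ∀ n, u n ≤ θ := fun n => by
    simp only [hu]
    exact div_le_self hθ.le (by have : (0:ℝ) ≤ n := Nat.cast_nonneg n
                                linarith)
  have hulim : Tendsto u atTop (𝓝 0) :=
    tendsto_const_nhds.div_atTop (tendsto_atTop_add_const_right _ _ tendsto_natCast_atTop_atTop)
  have hulim' : Tendsto u atTop (𝓝[>] 0) :=
    tendsto_nhdsWithin_iff.2 ⟨hulim, Eventually.of_forall hu0⟩
  have hGu := hG.comp hulim'
  have hinton : ∀ n, IntegrableOn (specD μ 1) (Ioc (u n) θ) := fun n =>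
    ((hcont1.mono (hsub _ (hu0 n))).integrableOn_Icc).mono_set Ioc_subset_Icc_self
  have hI : IntegrableOn (specD μ 1) (Ioc 0 θ) := by
    refine integrableOn_Ioc_of_intervalIntegral_norm_bounded_left (l := atTop) (a := u)
      (I := (poissonG μ 1 θ + 5 / 3 * (poissonG μ 1 (2 * θ) - poissonG μ 1 θ) + 2) / 2)
      hinton hulim ?_
    filter_upwards [hGu.eventually (gt_mem_nhds zero_lt_one)] with n hn
    have h1 := (abs_le.1 (hδ (u n) (hu0 n) (hu1 n))).2
    rw [intervalIntegral.integral_of_le (hu1 n)] at h1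
    simp only [Function.comp] at hn
    simp_rw [Real.norm_of_nonneg (specD_nonneg (μ := μ) zero_le_one le_rfl _)]
    linarith
  have hII : IntervalIntegrable (specD μ 1) volume 0 θ :=
    (intervalIntegrable_iff_integrableOn_Ioc_of_le hθ.le).2 hI
  have hJ : Tendsto (fun n => ∫ t in (u n)..θ, specD μ 1 t) atTop
      (𝓝 (∫ t in (0:ℝ)..θ, specD μ 1 t)) := by
    have hc : ContinuousOn (fun x => ∫ t in x..θ, specD μ 1 t) (uIcc 0 θ) :=
      intervalIntegral.continuousOn_primitive_interval_left
        (by rw [uIcc_of_le hθ.le, integrableOn_Icc_iff_integrableOn_Ioc]; exact hI)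
    have h0 := hc 0 left_mem_uIcc
    refine h0.tendsto.comp (tendsto_nhdsWithin_iff.2 ⟨hulim, Eventually.of_forall fun n => ?_⟩)
    rw [uIcc_of_le hθ.le]
    exact ⟨(hu0 n).le, hu1 n⟩
  have hfin := le_of_tendsto_of_tendsto ((hJ.const_mul 2).sub_const (poissonG μ 1 θ)).abs
    ((hGu.const_mul 2).const_add (5 / 3 * (poissonG μ 1 (2 * θ) - poissonG μ 1 θ)))
    (Eventually.of_forall fun n => hδ (u n) (hu0 n) (hu1 n))
  simpa using hfin

/-! ### Truncated mean and Laplace transform -/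

lemma integrable_min {μ : Measure ℝ} [IsProbabilityMeasure μ] (hμ : ∀ᵐ x ∂μ, 0 ≤ x) {c : ℝ}
    (hc : 0 ≤ c) : Integrable (fun x => min x c) μ := by
  refine (integrable_const c).mono' (by fun_prop) ?_
  filter_upwards [hμ] with x hx
  rw [Real.norm_of_nonneg (le_min hx hc)]
  exact min_le_right _ _

/-- `ℓ(c) = E[min(X, c)]`, by the layer-cake formula. -/
lemma ell_eq {μ : Measure ℝ} [IsProbabilityMeasure μ] (hμ : ∀ᵐ x ∂μ, 0 ≤ x) {c : ℝ}
    (hc : 0 ≤ c) : ell μ c = ∫ x, min x c ∂μ := by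
  rw [(integrable_min hμ hc).integral_eq_integral_meas_lt
    (by filter_upwards [hμ] with x hx using le_min hx hc)]
  have : ∀ t : ℝ, μ.real {a | t < min a c} = (Iio c).indicator (tailF μ) t := by
    intro t
    by_cases ht : t < c
    · rw [indicator_of_mem (mem_Iio.2 ht)]
      simp [ht, tailF, Measure.real, Ioi]
    · rw [indicator_of_notMem (by simpa using ht)]
      simp [ht]
  simp_rw [this]
  rw [setIntegral_indicator measurableSet_Iio, Ioi_inter_Iio, ell,
    intervalIntegral.integral_of_le hc, integral_Ioc_eq_integral_Ioo]

lemma ell_tendsto {μ : Measure ℝ} [IsProbabilityMeasure μ] (hμ : ∀ᵐ x ∂μ, 0 ≤ x)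
    (hmean : ∫⁻ x, ENNReal.ofReal |x| ∂μ = ⊤) : Tendsto (ell μ) atTop atTop := by
  have h1 : Tendsto (fun n : ℕ => ∫⁻ x, ENNReal.ofReal (min x n) ∂μ) atTop
      (𝓝 (∫⁻ x, ENNReal.ofReal |x| ∂μ)) := by
    refine lintegral_tendsto_of_tendsto_of_monotone (fun n => by fun_prop) ?_ ?_
    · refine ae_of_all _ fun x m n hmn => ?_
      have : (m : ℝ) ≤ n := by exact_mod_cast hmn
      dsimp only
      gcongr
    · filter_upwards [hμ] with x hx
      refine tendsto_const_nhds.congr' ?_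
      filter_upwards [eventually_ge_atTop ⌈x⌉₊] with n hn
      rw [min_eq_left ((Nat.le_ceil x).trans (by exact_mod_cast hn)), abs_of_nonneg hx]
  rw [hmean] at h1
  rw [tendsto_atTop_atTop]
  intro b
  obtain ⟨n, hn⟩ := (h1.eventually (lt_mem_nhds (a := ENNReal.ofReal b)
    ENNReal.ofReal_lt_top)).exists
  refine ⟨n, fun x hx => ?_⟩
  have hn0 : (0:ℝ) ≤ n := Nat.cast_nonneg n
  rw [ell_eq hμ (hn0.trans hx)]
  rw [← ofReal_integral_eq_lintegral_ofReal (integrable_min hμ hn0)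
    (by filter_upwards [hμ] with y hy using le_min hy hn0)] at hn
  have h2 : ∫ y, min y (n:ℝ) ∂μ ≤ ∫ y, min y x ∂μ :=
    integral_mono (integrable_min hμ hn0) (integrable_min hμ (hn0.trans hx)) fun y => by
      dsimp only; gcongr
  exact (ENNReal.ofReal_lt_ofReal_iff'.1 hn).1.le.trans h2

/-- Pointwise comparison of `1 - e^{-y}` with `min y 1`; the error away from the small values of
`y` is paid for by an increment of `c ↦ min y c`. -/
lemma exp_min_bound {y ε : ℝ} (hy : 0 ≤ y) (hε : 0 < ε) (hε1 : ε ≤ 1) :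
    |1 - Real.exp (-y) - min y 1| ≤ ε * min y 1 + 2 / ε * (min y 2 - min y (ε / 2)) := by
  rcases le_or_gt y ε with h | h
  · have h1 : y ≤ 1 := h.trans hε1
    have h2 : 0 ≤ min y 2 - min y (ε / 2) := by
      rw [sub_nonneg]; gcongr; linarith
    have h3 := Real.abs_exp_sub_one_sub_id_le (x := -y) (by rwa [abs_neg, abs_of_nonneg hy])
    rw [min_eq_left h1]
    have h4 : |1 - Real.exp (-y) - y| = |Real.exp (-y) - 1 - -y| := by
      rw [← abs_neg]; congr 1; ring
    have h5 : 0 ≤ 2 / ε * (min y 2 - min y (ε / 2)) := by positivity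
    rw [h4]
    nlinarith
  · have h1 : 0 ≤ min y 1 := le_min hy zero_le_one
    have h2 : min y 1 ≤ 1 := min_le_right _ _
    have h3 : ε ≤ min y 2 := le_min h.le (by linarith)
    have h4 : min y (ε / 2) ≤ ε / 2 := min_le_right _ _
    have h5 : Real.exp (-y) ≤ 1 := Real.exp_le_one_iff.2 (by linarith)
    have h6 := Real.exp_pos (-y)
    have h7 : 1 ≤ 2 / ε * (min y 2 - min y (ε / 2)) := by
      rw [div_mul_eq_mul_div, le_div_iff₀ hε]; linarith
    have h8 : 0 ≤ ε * min y 1 := by positivity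
    rw [abs_le]; constructor <;> linarith

lemma lap_ell_bound {μ : Measure ℝ} [IsProbabilityMeasure μ] (hμ : ∀ᵐ x ∂μ, 0 ≤ x)
    {a ε : ℝ} (ha : 0 < a) (hε : 0 < ε) (hε1 : ε ≤ 1) :
    |(1 - lap μ a) / a - ell μ (1 / a)|
      ≤ ε * ell μ (1 / a) + 2 / ε * (ell μ (2 * (1 / a)) - ell μ (ε / 2 * (1 / a))) := by
  have c1 : 0 ≤ 1 / a := by positivity
  have c2 : 0 ≤ 2 * (1 / a) := by positivity
  have c3 : 0 ≤ ε / 2 * (1 / a) := by positivity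
  have i0 : Integrable (fun x => (1 - Real.exp (-a * x)) / a) μ :=
    ((integrable_const (1:ℝ)).sub (integrable_exp_neg hμ ha)).div_const a
  have i1 := integrable_min hμ c1
  have i2 := integrable_min hμ c2
  have i3 := integrable_min hμ c3
  have i23 : Integrable (fun x => 2 / ε * (min x (2 * (1 / a)) - min x (ε / 2 * (1 / a)))) μ :=
    (i2.sub i3).const_mul _
  have e0 : (1 - lap μ a) / a = ∫ x, (1 - Real.exp (-a * x)) / a ∂μ := by
    rw [integral_div, integral_sub (integrable_const _) (integrable_exp_neg hμ ha), lap]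
    simp
  rw [e0, ell_eq hμ c1, ell_eq hμ c2, ell_eq hμ c3, ← integral_sub i0 i1, ← integral_sub i2 i3,
    ← integral_const_mul, ← integral_const_mul,
    ← integral_add (i1.const_mul _) i23]
  refine abs_integral_le_integral_abs.trans (integral_mono_ae (i0.sub i1).abs
    ((i1.const_mul _).add i23) ?_)
  filter_upwards [hμ] with x hx
  have hm : ∀ c : ℝ, min x (c * (1 / a)) = min (a * x) c / a := by
    intro c
    rw [← min_div_div_right ha.le, mul_div_cancel_left₀ _ ha.ne', mul_one_div]
  have h := exp_min_bound (mul_nonneg ha.le hx) hε hε1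
  have h1 := hm 1
  rw [one_mul] at h1
  rw [h1, hm 2, hm (ε / 2), ← sub_div, abs_div, abs_of_pos ha, ← sub_div, mul_div_assoc',
    mul_div_assoc', ← add_div, div_le_div_iff_of_pos_right ha, neg_mul]
  exact h

/-- Slow variation, assumed for factors `c > 1`, holds for all `c > 0`. -/
lemma sv_all {f : ℝ → ℝ} (hf : SlowlyVarying f) {c : ℝ} (hc : 0 < c) :
    Tendsto (fun x => f (c * x) / f x) atTop (𝓝 1) := by
  rcases lt_trichotomy c 1 with h | h | h
  · have h1 := (hf.2 c⁻¹ ((one_lt_inv₀ hc).2 h)).comp (tendsto_id.const_mul_atTop hc)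
    have h2 := h1.inv₀ one_ne_zero
    rw [inv_one] at h2
    refine h2.congr fun x => ?_
    simp only [Function.comp, id]
    rw [inv_mul_cancel_left₀ hc.ne', inv_div]
  · subst h
    refine tendsto_const_nhds.congr' ?_
    filter_upwards [hf.1] with x hx
    rw [one_mul, div_self hx.ne']
  · exact hf.2 c h

/-- Abelian theorem: `1 - E[e^{-aX}] ∼ a ℓ(1/a)`. -/
lemma lap_ell_tendsto {μ : Measure ℝ} [IsProbabilityMeasure μ] (hμ : ∀ᵐ x ∂μ, 0 ≤ x)
    (hsv : SlowlyVarying (ell μ)) :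
    Tendsto (fun a => (1 - lap μ a) / a / ell μ (1 / a)) (𝓝[>] 0) (𝓝 1) := by
  have hinv : Tendsto (fun a : ℝ => 1 / a) (𝓝[>] 0) atTop := by
    simpa using tendsto_inv_nhdsGT_zero (𝕜 := ℝ)
  rw [Metric.tendsto_nhds]
  intro η hη
  set ε := min (η / 2) 1 with hε
  have hε0 : 0 < ε := by positivity
  have hε1 : ε ≤ 1 := min_le_right _ _
  have hεη : ε < η := (min_le_left _ _).trans_lt (by linarith)
  have h1 : Tendsto (fun a : ℝ => ε + 2 / ε * (ell μ (2 * (1 / a)) / ell μ (1 / a)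
      - ell μ (ε / 2 * (1 / a)) / ell μ (1 / a))) (𝓝[>] 0) (𝓝 (ε + 2 / ε * (1 - 1))) :=
    ((((sv_all hsv two_pos).comp hinv).sub ((sv_all hsv (half_pos hε0)).comp hinv)).const_mul
      _).const_add _
  rw [sub_self, mul_zero, add_zero] at h1
  filter_upwards [h1.eventually (gt_mem_nhds hεη), hinv.eventually hsv.1, self_mem_nhdsWithin]
    with a h2 h3 ha
  refine lt_of_le_of_lt ?_ h2
  have h4 := lap_ell_bound hμ (mem_Ioi.1 ha) hε0 hε1
  rw [Real.dist_eq]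
  have h5 : (1 - lap μ a) / a / ell μ (1 / a) - 1
      = ((1 - lap μ a) / a - ell μ (1 / a)) / ell μ (1 / a) := by
    rw [sub_div _ (ell μ (1 / a)), div_self h3.ne']
  rw [h5, abs_div, abs_of_pos h3, div_le_iff₀ h3]
  refine h4.trans (le_of_eq ?_)
  field_simp

lemma lap_lt_one {μ : Measure ℝ} [IsProbabilityMeasure μ] (hμ : ∀ᵐ x ∂μ, 0 ≤ x)
    (hmean : ∫⁻ x, ENNReal.ofReal |x| ∂μ = ⊤) {a : ℝ} (ha : 0 < a) : lap μ a < 1 := by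
  refine lt_of_le_of_ne (lap_le_one hμ ha) fun h => ?_
  have i : Integrable (fun x => 1 - Real.exp (-a * x)) μ :=
    (integrable_const (1:ℝ)).sub (integrable_exp_neg hμ ha)
  have h0 : ∫ x, (1 - Real.exp (-a * x)) ∂μ = 0 := by
    rw [integral_sub (integrable_const _) (integrable_exp_neg hμ ha)]
    rw [lap] at h
    rw [h]; simp
  rw [integral_eq_zero_iff_of_nonneg_ae (by
    filter_upwards [hμ] with x hx
    have : Real.exp (-a * x) ≤ 1 := Real.exp_le_one_iff.2 (by nlinarith)
    simpa using this) i] at h0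
  have : ∫⁻ x, ENNReal.ofReal |x| ∂μ = 0 := by
    rw [lintegral_eq_zero_iff' (by fun_prop)]
    filter_upwards [h0] with x hx
    have h1 : Real.exp (-a * x) = 1 := by simp only [Pi.zero_apply] at hx; linarith
    rw [Real.exp_eq_one_iff] at h1
    have : x = 0 := by
      rcases mul_eq_zero.1 h1 with h2 | h2
      · linarith
      · exact h2
    simp [this]
  rw [this] at hmean
  exact ENNReal.zero_ne_top hmean

/-- If `φ(t) = 1` then `cos (tX) = 1` almost surely, so `X` lives on the lattice `(2π/|t|) ℤ`. -/
lemma charFun_ne_one {μ : Measure ℝ} [IsProbabilityMeasure μ] (harith : ¬ IsArith μ)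
    {t : ℝ} (ht : t ≠ 0) : charFun μ t ≠ 1 := by
  intro h
  refine harith ⟨2 * Real.pi / |t|, by positivity, le_antisymm prob_le_one ?_⟩
  have ic : Integrable (fun x : ℝ => Complex.exp (t * x * Complex.I)) μ := by
    refine (integrable_const (1:ℝ)).mono' (by fun_prop) (ae_of_all _ fun x => ?_)
    rw [← Complex.ofReal_mul, Complex.norm_exp_ofReal_mul_I]
  have ec : ∀ x : ℝ, (Complex.exp (t * x * Complex.I)).re = Real.cos (t * x) := fun x => by
    rw [← Complex.ofReal_mul, Complex.exp_ofReal_mul_I_re]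
  have ir : Integrable (fun x : ℝ => Real.cos (t * x)) μ := ic.re.congr (ae_of_all _ ec)
  have h1 : ∫ x, Real.cos (t * x) ∂μ = 1 := by
    have := integral_re ic
    simp only [RCLike.re_to_complex, ec] at this
    rw [this, ← charFun_apply_real, h, Complex.one_re]
  have h0 : ∫ x, (1 - Real.cos (t * x)) ∂μ = 0 := by
    rw [integral_sub (integrable_const _) ir, h1]; simp
  have i : Integrable (fun x => 1 - Real.cos (t * x)) μ := (integrable_const _).sub ir
  rw [integral_eq_zero_iff_of_nonneg (fun x => by simpa using Real.cos_le_one _) i] at h0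
  rw [← measure_univ (μ := μ)]
  refine measure_mono_ae ?_
  filter_upwards [h0] with x hx _
  have h2 : Real.cos (t * x) = 1 := by simp only [Pi.zero_apply] at hx; linarith
  obtain ⟨n, hn⟩ := (Real.cos_eq_one_iff _).1 h2
  rcases abs_choice t with h3 | h3
  · refine ⟨n, ?_⟩
    rw [h3]; field_simp; linarith
  · refine ⟨-n, ?_⟩
    rw [h3]; push_cast; field_simp; linarith

/-! ### Conclusion -/

/-- For a nonnegative, non-arithmetic `X` with `E X = ∞` and `ℓ` slowly varying,
`J(θ) = ∫₀^θ Re(1/(1-φ(t))) dt ∼ (π/2)/ℓ(1/θ)` as `θ → 0+`. -/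
theorem stmt5 (μ : Measure ℝ) [IsProbabilityMeasure μ]
    (hnn : μ (Set.Iio 0) = 0)
    (hmean : ∫⁻ x, ENNReal.ofReal |x| ∂μ = ⊤)
    (harith : ¬ IsArith μ)
    (hsv : SlowlyVarying (ell μ)) :
    Tendsto (fun θ : ℝ =>
        (∫ t in (0:ℝ)..θ, ((1 - charF μ t)⁻¹).re) / ((Real.pi / 2) / ell μ (1 / θ)))
      (𝓝[>] (0:ℝ)) (𝓝 1) := by
  have hμ : ∀ᵐ x ∂μ, 0 ≤ x := by
    rw [ae_iff]
    simpa [Iio] using hnn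
  have hinv : Tendsto (fun a : ℝ => 1 / a) (𝓝[>] 0) atTop := by
    simpa using tendsto_inv_nhdsGT_zero (𝕜 := ℝ)
  have hinf := (ell_tendsto hμ hmean).comp hinv
  have hpos : ∀ᶠ a : ℝ in 𝓝[>] 0, 0 < ell μ (1 / a) := hinv.eventually hsv.1
  -- `G(a) ∼ π / ℓ(1/a)`
  have hGl : Tendsto (fun a => poissonG μ 1 a * ell μ (1 / a)) (𝓝[>] 0) (𝓝 Real.pi) := by
    have h := ((lap_ell_tendsto hμ hsv).inv₀ one_ne_zero).const_mul Real.pi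
    rw [inv_one, mul_one] at h
    refine h.congr' ?_
    filter_upwards [hpos, self_mem_nhdsWithin] with a h1 ha
    have ha : 0 < a := ha
    have h2 : 0 < 1 - lap μ a := sub_pos.2 (lap_lt_one hμ hmean ha)
    rw [poissonG, one_mul]
    field_simp
  have hG : Tendsto (poissonG μ 1) (𝓝[>] 0) (𝓝 0) := by
    refine (hGl.div_atTop hinf).congr' ?_
    filter_upwards [hpos] with a h1
    exact mul_div_cancel_right₀ _ h1.ne'
  have hdouble : Tendsto (fun a : ℝ => 2 * a) (𝓝[>] 0) (𝓝[>] 0) := by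
    refine tendsto_nhdsWithin_iff.2 ⟨?_, ?_⟩
    · have : Tendsto (fun a : ℝ => 2 * a) (𝓝 0) (𝓝 (2 * 0)) :=
        (continuous_const.mul continuous_id).tendsto 0
      rw [mul_zero] at this
      exact this.mono_left nhdsWithin_le_nhds
    · filter_upwards [self_mem_nhdsWithin] with a ha
      have ha : 0 < a := ha
      exact mem_Ioi.2 (by positivity)
  have hG2 : Tendsto (fun a => poissonG μ 1 (2 * a) * ell μ (1 / a)) (𝓝[>] 0) (𝓝 Real.pi) := by
    have h1 := (hGl.comp hdouble).mul ((hsv.2 2 one_lt_two).comp (hinv.comp hdouble))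
    rw [mul_one] at h1
    refine h1.congr' ?_
    filter_upwards [hdouble.eventually hpos, self_mem_nhdsWithin] with a h2 ha
    have ha : 0 < a := ha
    simp only [Function.comp]
    have h3 : 2 * (1 / (2 * a)) = 1 / a := by field_simp
    rw [h3]
    generalize ell μ (1 / (2 * a)) = u at h2 ⊢
    field_simp
  have hJ : ∀ θ : ℝ, ∫ t in (0:ℝ)..θ, ((1 - charF μ t)⁻¹).re = ∫ t in (0:ℝ)..θ, specD μ 1 t := by
    intro θ
    simp [specD, charF_eq]
  simp_rw [hJ]
  have hdiff : Tendsto (fun θ => 2 * (∫ t in (0:ℝ)..θ, specD μ 1 t) * ell μ (1 / θ)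
      - poissonG μ 1 θ * ell μ (1 / θ)) (𝓝[>] 0) (𝓝 0) := by
    have hb := (hG2.sub hGl).const_mul (5 / 3)
    rw [sub_self, mul_zero] at hb
    refine squeeze_zero_norm' ?_ hb
    filter_upwards [hpos, self_mem_nhdsWithin] with θ h1 hθ
    have h2 := tauber_one hμ (fun t ht => charFun_ne_one harith ht)
      (fun a ha => lap_lt_one hμ hmean ha) hG (mem_Ioi.1 hθ)
    rw [← sub_mul, Real.norm_eq_abs, abs_mul, abs_of_pos h1, ← sub_mul, ← mul_assoc]
    exact mul_le_mul_of_nonneg_right h2 h1.le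
  have hfin := (hdiff.add hGl).div_const Real.pi
  rw [zero_add, div_self Real.pi_ne_zero] at hfin
  refine hfin.congr fun θ => ?_
  have := Real.pi_ne_zero
  rw [div_div_eq_mul_div, sub_add_cancel]
  field_simp
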